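/- arXiv:1307.3649 — 4 statements merged into one kernel-verified Lean document; each statement's English description precedes it below -/
import Mathlib

section
/- Explicit formulas for the second half of the remainders of the Euclidean algorithm with symmetric quotients: let q_1, …, q_s be positive integers, let r_1, …, r_{2s+2} be the associated remainder sequence of the symmetric Euclidean scheme, and let 𝔠_{i,j} denote the continuants of (q_1, …, q_s). Then for every 1 ≤ i ≤ s+1, r_{2s−i+3} = 𝔠_{1,i−2} = (−1)^{i+s}·(𝔠_{1,s}·𝔠_{i,s−1} − 𝔠_{1,s−1}·𝔠_{i,s}). -/
/-- Auxiliary for continuants: `contAux u i n` is the continuant `𝔠_{i, i+n-1}` of the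
sequence `u`, computed via the recurrence `𝔠_{i,j} = u j * 𝔠_{i,j-1} + 𝔠_{i,j-2}`. -/
def contAux (u : ℤ → ℤ) (i : ℤ) : ℕ → ℤ
  | 0 => 1
  | 1 => u i
  | n + 2 => u (i + n + 1) * contAux u i (n + 1) + contAux u i n

/-- `cont u i j` is the continuant `𝔠_{i,j}` of the sequence `u`, with the boundary
conventions `𝔠_{j+1,j} = 1` and `𝔠_{i,j} = 0` for `i > j + 1` (in particular
`𝔠_{j+2,j} = 0`), and the recurrence `𝔠_{i,j} = u j * 𝔠_{i,j-1} + 𝔠_{i,j-2}`. -/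
def cont (u : ℤ → ℤ) (i j : ℤ) : ℤ :=
  if j + 1 < i then 0 else contAux u i (j + 1 - i).toNat

/-- The symmetric doubling of `(q_1, …, q_s)`:
`(Q_1, …, Q_{2s}) = (q_1, …, q_s, q_s, …, q_1)`. -/
def symQuot (q : ℤ → ℤ) (s : ℕ) (k : ℤ) : ℤ :=
  if k ≤ (s : ℤ) then q k else q (2 * (s : ℤ) + 1 - k)

/-- Auxiliary: `symAux q s m` is the remainder `r_{2s+2-m}` of the symmetric
Euclidean scheme attached to `(q_1, …, q_s)`. -/
def symAux (q : ℤ → ℤ) (s : ℕ) : ℕ → ℤ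
  | 0 => 0
  | 1 => 1
  | m + 2 => symQuot q s (2 * (s : ℤ) - (m : ℤ)) * symAux q s (m + 1) + symAux q s m

/-- `symRem q s k` is the remainder `r_k` of the symmetric Euclidean scheme attached to
`(q_1, …, q_s)`: with `(Q_1, …, Q_{2s}) = (q_1, …, q_s, q_s, …, q_1)`, one has
`r_{2s+2} = 0`, `r_{2s+1} = 1`, and `r_k = Q_k * r_{k+1} + r_{k+2}` for `1 ≤ k ≤ 2s`. -/
def symRem (q : ℤ → ℤ) (s : ℕ) (k : ℤ) : ℤ :=
  symAux q s (2 * (s : ℤ) + 2 - k).toNat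

theorem cont_rec (u : ℤ → ℤ) (i j : ℤ) (h : i ≤ j) :
    cont u i j = u j * cont u i (j - 1) + cont u i (j - 2) := by
  obtain ⟨n, rfl⟩ : ∃ n : ℕ, j = i + n := ⟨(j - i).toNat, by omega⟩
  unfold cont
  rcases n with _ | n
  · simp [contAux]
    intro h
    omega
  · rw [if_neg (by omega), if_neg (by omega), if_neg (by omega)]
    have h1 : (i + ((n + 1 : ℕ) : ℤ) + 1 - i).toNat = n + 2 := by omega
    have h2 : (i + ((n + 1 : ℕ) : ℤ) - 1 + 1 - i).toNat = n + 1 := by omega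
    have h3 : (i + ((n + 1 : ℕ) : ℤ) - 2 + 1 - i).toNat = n := by omega
    rw [h1, h2, h3, contAux]
    push_cast
    rw [add_assoc]

theorem cont_one (u : ℤ → ℤ) (i : ℤ) : cont u i (i - 1) = 1 := by
  simp [cont, contAux]

theorem cont_zero (u : ℤ → ℤ) (i : ℤ) : cont u i (i - 2) = 0 := by
  unfold cont
  rw [if_pos (by omega)]

theorem symAux_eq (q : ℤ → ℤ) (s : ℕ) : ∀ m : ℕ, m ≤ s + 1 →
    symAux q s m = cont q 1 ((m : ℤ) - 1)
  | 0, _ => by simp [symAux, cont]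
  | 1, _ => by simp [symAux, cont, contAux]
  | m + 2, h => by
    rw [symAux, symAux_eq q s (m + 1) (by omega), symAux_eq q s m (by omega),
      cont_rec q 1 (((m + 2 : ℕ) : ℤ) - 1) (by omega), symQuot, if_neg (by omega)]
    push_cast
    ring_nf

theorem det_formula (q : ℤ → ℤ) (i : ℤ) (hi : 1 ≤ i) (n : ℕ) :
    cont q 1 (i - 1 + n) * cont q i (i - 1 + n - 1) -
      cont q 1 (i - 1 + n - 1) * cont q i (i - 1 + n) = (-1) ^ (n + 1) * cont q 1 (i - 2) := by
  induction n with
  | zero =>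
    have h1 := cont_one q i
    have h2 := cont_zero q i
    have e : i - 1 - 1 = i - 2 := by ring
    simp [e, h1, h2]
  | succ n ih =>
    rw [cont_rec q 1 (i - 1 + ((n + 1 : ℕ) : ℤ)) (by omega),
      cont_rec q i (i - 1 + ((n + 1 : ℕ) : ℤ)) (by omega)]
    have e1 : i - 1 + ((n + 1 : ℕ) : ℤ) - 1 = i - 1 + n := by push_cast; ring
    have e2 : i - 1 + ((n + 1 : ℕ) : ℤ) - 2 = i - 1 + n - 1 := by push_cast; ring
    rw [e1, e2, pow_succ]
    linear_combination -ih

theorem symRem_second_half_formula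
    (s : ℕ) (hs : 1 ≤ s) (q : ℤ → ℤ) (hq : ∀ k : ℤ, 1 ≤ k → k ≤ (s : ℤ) → 0 < q k)
    (i : ℤ) (hi : 1 ≤ i) (his : i ≤ (s : ℤ) + 1) :
    symRem q s (2 * (s : ℤ) - i + 3) = cont q 1 (i - 2) ∧
      cont q 1 (i - 2) =
        (-1 : ℤ) ^ (i + (s : ℤ)).natAbs *
          (cont q 1 (s : ℤ) * cont q i ((s : ℤ) - 1) -
            cont q 1 ((s : ℤ) - 1) * cont q i (s : ℤ)) := by
  constructor
  · unfold symRem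
    rw [symAux_eq q s _ (by omega)]
    congr 1
    omega
  · obtain ⟨n, hn⟩ : ∃ n : ℕ, (s : ℤ) = i - 1 + n := ⟨(s + 1 - i).toNat, by omega⟩
    have h := det_formula q i hi n
    rw [← hn] at h
    rw [h, ← mul_assoc, ← pow_add, Even.neg_one_pow, one_mul]
    rw [Nat.even_iff]
    omega
end

section
/- Wagon's observation: let q_1, …, q_s be positive integers and let r_1, …, r_{2s+2} be the associated remainder sequence of the symmetric Euclidean scheme with n = r_1. Then for every 0 ≤ i ≤ s, the integer r_{i+1}² + r_{2s+2−i}² is a multiple of n. -/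
lemma symQuot_symm (q : ℤ → ℤ) (s : ℕ) (k l : ℤ) (h : k + l = 2 * (s : ℤ) + 1) :
    symQuot q s k = symQuot q s l := by
  unfold symQuot
  split_ifs
  · omega
  · congr 1; omega
  · congr 1; omega
  · omega

/-- Reversed remainders satisfy the same recurrence up to alternating signs, so they are
proportional to the remainders modulo `n`. -/
lemma symAux_reverse (q : ℤ → ℤ) (s : ℕ) (m : ℕ) : m + 1 ≤ 2 * s + 1 →
    (symAux q s (2 * s + 1) ∣
      (-1) ^ m * symAux q s (2 * s + 1 - m) + symAux q s (2 * s) * symAux q s m) ∧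
    (symAux q s (2 * s + 1) ∣
      (-1) ^ (m + 1) * symAux q s (2 * s + 1 - (m + 1))
        + symAux q s (2 * s) * symAux q s (m + 1)) := by
  induction m with
  | zero => intro _; simp [symAux]
  | succ m ih =>
    intro h
    obtain ⟨h1, h2⟩ := ih (by omega)
    refine ⟨h2, ?_⟩
    obtain ⟨k, hk⟩ : ∃ k, 2 * s + 1 = k + m + 2 := ⟨2 * s + 1 - (m + 2), by omega⟩
    have e0 : 2 * s + 1 - m = k + 2 := by omega
    have e1 : 2 * s + 1 - (m + 1) = k + 1 := by omega
    have e2 : 2 * s + 1 - (m + 1 + 1) = k := by omega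
    rw [e0] at h1
    rw [e1] at h2
    rw [e2]
    have r1 : symAux q s (k + 2) =
      symQuot q s (2 * (s : ℤ) - (k : ℤ)) * symAux q s (k + 1) + symAux q s k := rfl
    have r2 : symAux q s (m + 1 + 1) =
      symQuot q s (2 * (s : ℤ) - (m : ℤ)) * symAux q s (m + 1) + symAux q s m := rfl
    rw [symQuot_symm q s (2 * (s : ℤ) - (k : ℤ)) (2 * (s : ℤ) - (m : ℤ)) (by omega)] at r1
    rw [r1] at h1
    rw [r2]
    have := dvd_add h1 (h2.mul_left (symQuot q s (2 * (s : ℤ) - (m : ℤ))))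
    obtain ⟨t, ht⟩ := this
    exact ⟨t, by linear_combination ht⟩

theorem wagon_observation
    (s : ℕ) (hs : 1 ≤ s) (q : ℤ → ℤ) (hq : ∀ k : ℤ, 1 ≤ k → k ≤ (s : ℤ) → 0 < q k)
    (i : ℕ) (his : i ≤ s) :
    symRem q s 1 ∣
      symRem q s ((i : ℤ) + 1) ^ 2 + symRem q s (2 * (s : ℤ) + 2 - (i : ℤ)) ^ 2 := by
  unfold symRem
  have e0 : (2 * (s : ℤ) + 2 - 1).toNat = 2 * s + 1 := by omega
  have e1 : (2 * (s : ℤ) + 2 - ((i : ℤ) + 1)).toNat = 2 * s + 1 - i := by omega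
  have e2 : (2 * (s : ℤ) + 2 - (2 * (s : ℤ) + 2 - (i : ℤ))).toNat = i := by omega
  rw [e0, e1, e2]
  have ha := (symAux_reverse q s (2 * s) le_rfl).1
  have hi := (symAux_reverse q s i (by omega)).1
  have e3 : 2 * s + 1 - 2 * s = 1 := by omega
  have e4 : symAux q s 1 = 1 := rfl
  rw [e3, e4, pow_mul, neg_one_sq, one_pow, mul_one] at ha
  have hsq : ((-1 : ℤ) ^ i) ^ 2 = 1 := by rw [← pow_mul, mul_comm, pow_mul]; simp
  generalize symAux q s (2 * s + 1) = n at *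
  generalize symAux q s (2 * s + 1 - i) = b at *
  generalize symAux q s (2 * s) = a at *
  generalize symAux q s i = c at *
  generalize (-1 : ℤ) ^ i = e at *
  have := dvd_add (hi.mul_right (e * b - a * c)) (ha.mul_right (c ^ 2))
  obtain ⟨t, ht⟩ := this
  exact ⟨t, by linear_combination ht + (-b ^ 2) * hsq⟩
end

section
/- Identification of the cofactor as a remainder of a shorter symmetric scheme: let q_1, …, q_s be positive integers with continuants 𝔠_{i,j}, and let i, j be integers with 0 ≤ j ≤ i and i + j ≤ s. Let r'_1, r'_2, … denote the remainder sequence of the symmetric Euclidean scheme associated to (q_{i−j+1}, …, q_s). Then r'_{2j+1} = 𝔠_{i−j+1,s}·𝔠_{i+j+1,s} + 𝔠_{i−j+1,s−1}·𝔠_{i+j+1,s−1}. -/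
theorem contAux_left (u : ℤ → ℤ) (i : ℤ) (n : ℕ) :
    contAux u i (n + 2) = u i * contAux u (i + 1) (n + 1) + contAux u (i + 2) n := by
  induction n using Nat.strong_induction_on with
  | _ n ih =>
    match n, ih with
    | 0, _ => simp [contAux]; ring
    | 1, _ =>
      simp only [contAux]
      push_cast
      rw [show i + 1 + 0 + 1 = i + 2 by ring, show i + 0 + 1 = i + 1 by ring,
        show i + 1 + 1 = i + 2 by ring]
      ring
    | n + 2, ih =>
      have h1 := ih (n + 1) (by omega)
      have h0 := ih n (by omega)
      rw [contAux, h1, h0]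
      rw [show contAux u (i + 1) (n + 2 + 1) = u (i + 1 + ((n + 1 : ℕ) : ℤ) + 1) *
        contAux u (i + 1) (n + 1 + 1) + contAux u (i + 1) (n + 1) from rfl,
        show contAux u (i + 2) (n + 2) = u (i + 2 + (n : ℤ) + 1) *
        contAux u (i + 2) (n + 1) + contAux u (i + 2) n from rfl]
      push_cast
      rw [show i + 1 + ((n : ℤ) + 1) + 1 = i + (n + 2) + 1 by ring,
        show i + 2 + (n : ℤ) + 1 = i + (n + 2) + 1 by ring]
      ring

theorem cont_left (u : ℤ → ℤ) (x y : ℤ) (h : x ≤ y) :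
    cont u x y = u x * cont u (x + 1) y + cont u (x + 2) y := by
  obtain ⟨n, rfl⟩ := Int.le.dest h
  rcases n with _ | n
  · simp [cont, contAux]
  · unfold cont
    rw [if_neg (by push_cast; omega), if_neg (by push_cast; omega),
      if_neg (by push_cast; omega)]
    rw [show (x + ((n + 1 : ℕ) : ℤ) + 1 - x).toNat = n + 2 by omega,
      show (x + ((n + 1 : ℕ) : ℤ) + 1 - (x + 1)).toNat = n + 1 by omega,
      show (x + ((n + 1 : ℕ) : ℤ) + 1 - (x + 2)).toNat = n by omega]
    exact contAux_left u x n

theorem contAux_shift (q p : ℤ → ℤ) (d : ℤ) (hp : ∀ k, p k = q (k + d)) (x : ℤ) (n : ℕ) :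
    contAux p x n = contAux q (x + d) n := by
  induction n using Nat.strong_induction_on with
  | _ n ih =>
    match n, ih with
    | 0, _ => rfl
    | 1, _ => exact hp x
    | n + 2, ih =>
      rw [contAux, contAux, ih (n + 1) (by omega), ih n (by omega), hp,
        show x + (n : ℤ) + 1 + d = x + d + n + 1 by ring]

theorem cont_shift (q p : ℤ → ℤ) (d : ℤ) (hp : ∀ k, p k = q (k + d)) (x y : ℤ) :
    cont p x y = cont q (x + d) (y + d) := by
  unfold cont
  rw [contAux_shift q p d hp, show y + d + 1 - (x + d) = y + 1 - x by ring]
  by_cases h : y + 1 < x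
  · rw [if_pos h, if_pos (by omega)]
  · rw [if_neg h, if_neg (by omega)]

theorem symAux_first (p : ℤ → ℤ) (n m : ℕ) (h : m ≤ n + 1) :
    symAux p n m = cont p 1 ((m : ℤ) - 1) := by
  induction m using Nat.strong_induction_on with
  | _ m ih =>
    match m, ih, h with
    | 0, _, _ => simp [symAux, cont]
    | 1, _, _ => simp [symAux, cont, contAux]
    | 2, _, h =>
      have : ¬ (2 * (n : ℤ) ≤ n) := by omega
      simp [symAux, cont, contAux, symQuot]
      intro h; omega
    | m + 3, ih, h =>
      rw [symAux, ih (m + 1 + 1) (by omega) (by omega), ih (m + 1) (by omega) (by omega)]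
      unfold cont symQuot
      rw [if_neg (by push_cast; omega), if_neg (by push_cast; omega),
        if_neg (by push_cast; omega), if_neg (by push_cast; omega)]
      rw [show (((m + 1 + 1 : ℕ) : ℤ) - 1 + 1 - 1).toNat = m + 1 by omega,
        show (((m + 1 : ℕ) : ℤ) - 1 + 1 - 1).toNat = m by omega,
        show (((m + 3 : ℕ) : ℤ) - 1 + 1 - 1).toNat = m + 2 by omega, contAux,
        show 2 * (n : ℤ) + 1 - (2 * (n : ℤ) - ((m + 1 : ℕ) : ℤ)) = 1 + m + 1 by
          push_cast; ring]

theorem symAux_second (p : ℤ → ℤ) (n t : ℕ) (h : t ≤ n) :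
    symAux p n (n + 1 + t) = symAux p n (n + 1) * cont p ((n : ℤ) - t + 1) n +
      symAux p n n * cont p ((n : ℤ) - t + 1) ((n : ℤ) - 1) := by
  induction t using Nat.strong_induction_on with
  | _ t ih =>
    match t, ih, h with
    | 0, _, _ => simp [cont, contAux]
    | 1, _, _ =>
      rw [show n + 1 + 1 = n + 2 from rfl, symAux]
      simp [cont, contAux, symQuot, show 2 * (n : ℤ) - n = n by ring]
      ring
    | t + 2, ih, h =>
      rw [show n + 1 + (t + 2) = (n + 1 + t) + 2 from rfl, symAux,
        show n + 1 + t + 1 = n + 1 + (t + 1) from rfl,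
        ih (t + 1) (by omega) (by omega), ih t (by omega) (by omega),
        cont_left p ((n : ℤ) - ((t + 2 : ℕ) : ℤ) + 1) n (by push_cast; omega),
        cont_left p ((n : ℤ) - ((t + 2 : ℕ) : ℤ) + 1) ((n : ℤ) - 1) (by push_cast; omega)]
      unfold symQuot
      rw [if_pos (by push_cast; omega)]
      push_cast
      rw [show 2 * (n : ℤ) - (n + 1 + t) = n - (t + 2) + 1 by ring,
        show (n : ℤ) - (t + 2) + 1 + 1 = n - (t + 1) + 1 by ring,
        show (n : ℤ) - (t + 2) + 1 + 2 = n - t + 1 by ring]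
      ring

theorem cofactor_is_remainder_of_shorter_scheme
    (s : ℕ) (hs : 1 ≤ s) (q : ℤ → ℤ) (hq : ∀ k : ℤ, 1 ≤ k → k ≤ (s : ℤ) → 0 < q k)
    (i j : ℕ) (hji : j ≤ i) (hijs : i + j ≤ s) :
    symRem (fun k => q (k + (i : ℤ) - (j : ℤ))) (s - i + j) (2 * (j : ℤ) + 1) =
      cont q ((i : ℤ) - (j : ℤ) + 1) (s : ℤ) * cont q ((i : ℤ) + (j : ℤ) + 1) (s : ℤ) +
        cont q ((i : ℤ) - (j : ℤ) + 1) ((s : ℤ) - 1) *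
          cont q ((i : ℤ) + (j : ℤ) + 1) ((s : ℤ) - 1) := by
  obtain ⟨n, hn⟩ : ∃ n, n = s - i + j := ⟨_, rfl⟩
  obtain ⟨t, ht⟩ : ∃ t, n = t + 2 * j := ⟨n - 2 * j, by omega⟩
  rw [← hn]
  generalize hp : (fun k : ℤ => q (k + (i : ℤ) - (j : ℤ))) = p
  have hp' : ∀ k, p k = q (k + ((i : ℤ) - j)) := by
    intro k; rw [← hp, ← add_sub_assoc]
  unfold symRem
  rw [show (2 * (n : ℤ) + 2 - (2 * (j : ℤ) + 1)).toNat = n + 1 + t by omega,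
    symAux_second p n t (by omega), symAux_first p n (n + 1) (by omega),
    symAux_first p n n (by omega)]
  simp only [cont_shift q p _ hp']
  rw [show (1 : ℤ) + ((i : ℤ) - j) = i - j + 1 by ring,
    show ((n + 1 : ℕ) : ℤ) - 1 + ((i : ℤ) - j) = s by omega,
    show (n : ℤ) - 1 + ((i : ℤ) - j) = s - 1 by omega,
    show (n : ℤ) + ((i : ℤ) - j) = s by omega,
    show (n : ℤ) - t + 1 + ((i : ℤ) - j) = i + j + 1 by omega]
end

section
/- Characterization of symmetric quotient sequences (Perron): let n and a be relatively prime integers with 0 < a < n. Then there exist a positive integer s and positive integers q_1, …, q_s such that the symmetric Euclidean scheme associated to (q_1, …, q_s) has first remainder r_1 = n and second remainder r_2 = a, if and only if a² ≡ −1 (mod n). -/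
/-- Companion of `symAux`: same recurrence with initial values `1, 0`. -/
def symCo (q : ℤ → ℤ) (s : ℕ) : ℕ → ℤ
  | 0 => 1
  | 1 => 0
  | m + 2 => symQuot q s (2 * (s : ℤ) - (m : ℤ)) * symCo q s (m + 1) + symCo q s m

theorem symQuot_shift (q : ℤ → ℤ) (s : ℕ) (k : ℤ) :
    symQuot q (s + 1) (k + 1) = symQuot (fun j => q (j + 1)) s k := by
  unfold symQuot
  push_cast
  by_cases h : k ≤ (s : ℤ)
  · rw [if_pos h, if_pos (by linarith)]
  · rw [if_neg h, if_neg (by linarith)]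
    congr 1
    ring

theorem sym_shift (q : ℤ → ℤ) (s : ℕ) (m : ℕ) :
    (symAux q (s + 1) (m + 1) =
        q 1 * symAux (fun j => q (j + 1)) s m + symCo (fun j => q (j + 1)) s m ∧
      symCo q (s + 1) (m + 1) = symAux (fun j => q (j + 1)) s m) := by
  induction m using Nat.twoStepInduction with
  | zero => simp [symAux, symCo]
  | one =>
    have h : symQuot q (s + 1) (2 * ((s : ℤ) + 1)) = q 1 := by
      unfold symQuot
      push_cast
      rw [if_neg (by omega)]
      congr 1
      ring
    simp [symAux, symCo, h]
  | more m ih1 ih2 =>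
    have h : symQuot q (s + 1) (2 * ((s + 1 : ℕ) : ℤ) - ((m + 1 : ℕ) : ℤ)) =
        symQuot (fun j => q (j + 1)) s (2 * (s : ℤ) - (m : ℤ)) := by
      rw [← symQuot_shift]
      congr 1
      push_cast
      ring
    constructor
    · rw [symAux, h, ih1.1, ih2.1, symAux, symCo]
      ring
    · rw [symCo, h, ih1.2, ih2.2, symAux]

theorem sym_step (q : ℤ → ℤ) (s : ℕ) (n a b m : ℤ)
    (hn : symAux (fun j => q (j + 1)) s (2 * s + 1) = n)
    (ha : symAux (fun j => q (j + 1)) s (2 * s) = a)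
    (hb : symCo (fun j => q (j + 1)) s (2 * s + 1) = b)
    (hm : symCo (fun j => q (j + 1)) s (2 * s) = m) :
    symAux q (s + 1) (2 * (s + 1) + 1) = q 1 * (q 1 * n + b) + (q 1 * a + m) ∧
    symAux q (s + 1) (2 * (s + 1)) = q 1 * n + b ∧
    symCo q (s + 1) (2 * (s + 1) + 1) = q 1 * n + a ∧
    symCo q (s + 1) (2 * (s + 1)) = n := by
  have h : symQuot q (s + 1) (2 * ((s + 1 : ℕ) : ℤ) - ((2 * s + 1 : ℕ) : ℤ)) = q 1 := by
    unfold symQuot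
    push_cast
    rw [if_pos (by omega)]
    congr 1
    ring
  have h1 := sym_shift q s (2 * s)
  have h2 := sym_shift q s (2 * s + 1)
  rw [hn, hb] at h2
  rw [ha, hm] at h1
  refine ⟨?_, h2.1, ?_, h2.2⟩
  · change symAux q (s + 1) (2 * s + 1 + 2) = _
    rw [symAux, h, h2.1, h1.1]
  · change symCo q (s + 1) (2 * s + 1 + 2) = _
    rw [symCo, h, h2.2, h1.2]

theorem sym_forward (s : ℕ) : ∀ q : ℤ → ℤ,
    symCo q s (2 * s + 1) = symAux q s (2 * s) ∧
    symAux q s (2 * s + 1) * symCo q s (2 * s) - symAux q s (2 * s) ^ 2 = 1 := by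
  induction s with
  | zero => intro q; simp [symAux, symCo]
  | succ s ih =>
    intro q
    obtain ⟨h1, h2⟩ := ih (fun j => q (j + 1))
    obtain ⟨e1, e2, e3, e4⟩ := sym_step q s _ _ _ _ rfl rfl h1 rfl
    rw [e1, e2, e3, e4]
    refine ⟨rfl, ?_⟩
    linear_combination h2

theorem sym_congr (q p : ℤ → ℤ) (s : ℕ) (h : ∀ k : ℤ, 1 ≤ k → k ≤ (s : ℤ) → q k = p k) :
    (∀ m : ℕ, m ≤ 2 * s + 1 → symAux q s m = symAux p s m) ∧
    (∀ m : ℕ, m ≤ 2 * s + 1 → symCo q s m = symCo p s m) := by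
  have hQ : ∀ m : ℕ, m + 2 ≤ 2 * s + 1 →
      symQuot q s (2 * (s : ℤ) - m) = symQuot p s (2 * (s : ℤ) - m) := by
    intro m hm
    unfold symQuot
    split_ifs with hh
    · exact h _ (by omega) (by omega)
    · exact h _ (by omega) (by omega)
  constructor <;> intro m
  · induction m using Nat.twoStepInduction with
    | zero => intro _; rfl
    | one => intro _; rfl
    | more m ih1 ih2 =>
      intro hm
      rw [symAux, symAux, hQ m hm, ih1 (by omega), ih2 (by omega)]
  · induction m using Nat.twoStepInduction with
    | zero => intro _; rfl
    | one => intro _; rfl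
    | more m ih1 ih2 =>
      intro hm
      rw [symCo, symCo, hQ m hm, ih1 (by omega), ih2 (by omega)]

theorem sym_backward (N : ℕ) : ∀ n a m : ℤ, n.toNat ≤ N → 0 < a → a < n → n * m = a ^ 2 + 1 →
    ∃ (s : ℕ) (q : ℤ → ℤ), 1 ≤ s ∧ (∀ k : ℤ, 1 ≤ k → k ≤ (s : ℤ) → 0 < q k) ∧
      symAux q s (2 * s + 1) = n ∧ symAux q s (2 * s) = a ∧ symCo q s (2 * s) = m := by
  induction N with
  | zero => intro n a m h1 h2 h3 _; omega
  | succ N ih =>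
    intro n a m hN ha han h
    have hm : 0 < m := by
      by_contra hc
      nlinarith [sq_nonneg a]
    have hma : m ≤ a := by
      by_contra hc
      nlinarith
    have hc : 0 < a / m := (Int.le_ediv_iff_mul_le hm).mpr (by omega)
    have hr0 := Int.emod_nonneg a hm.ne'
    have hr1 := Int.emod_lt_of_pos a hm
    have hdm := Int.emod_add_mul_ediv a m
    generalize a / m = c at *
    generalize a % m = r at *
    have key : m * (n - 2 * c * a + c ^ 2 * m) = r ^ 2 + 1 := by
      subst hdm
      linear_combination h
    have main : ∃ (s : ℕ) (q : ℤ → ℤ), (∀ k : ℤ, 1 ≤ k → k ≤ (s : ℤ) → 0 < q k) ∧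
        symAux q s (2 * s + 1) = m ∧ symAux q s (2 * s) = r ∧
        symCo q s (2 * s) = n - 2 * c * a + c ^ 2 * m := by
      rcases hr0.eq_or_lt with h0 | h0
      · subst h0
        have hm1 : m = 1 := Int.eq_one_of_dvd_one hm.le ⟨n - 2 * c * a + c ^ 2 * m, by linarith⟩
        refine ⟨0, fun _ => 1, fun _ _ _ => one_pos, ?_, ?_, ?_⟩
        · simp [symAux, hm1]
        · simp [symAux]
        · subst hm1
          simp [symCo]
          linarith
      · obtain ⟨s, q, _, h2⟩ := ih m r _ (by omega) h0 hr1 key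
        exact ⟨s, q, h2⟩
    obtain ⟨s, p, hp, e1, e2, e3⟩ := main
    have hs : (fun j : ℤ => if j + 1 = 1 then c else p (j + 1 - 1)) =
        fun j : ℤ => if j = 0 then c else p j := by
      funext j
      simp
    obtain ⟨g1, g2⟩ := sym_congr p (fun j : ℤ => if j = 0 then c else p j) s (by
      intro k hk _
      have : k ≠ 0 := by omega
      simp [this])
    have f := sym_step (fun k => if k = 1 then c else p (k - 1)) s m r r
      (n - 2 * c * a + c ^ 2 * m)
    simp only [hs] at f
    obtain ⟨f1, f2, _, f4⟩ := f (by rw [← (g1 _ (by omega)), e1])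
      (by rw [← (g1 _ (by omega)), e2])
      (by rw [← (g2 _ (by omega)), (sym_forward s p).1, e2])
      (by rw [← (g2 _ (by omega)), e3])
    simp only [if_true] at f1 f2
    refine ⟨s + 1, fun k => if k = 1 then c else p (k - 1), by omega, ?_, ?_, ?_, f4⟩
    · intro k h1 h2
      push_cast at h2
      by_cases hk : k = 1
      · simpa [hk] using hc
      · simp only [hk, if_false]
        exact hp _ (by omega) (by omega)
    · rw [f1]
      subst hdm
      ring
    · rw [f2]
      linarith

theorem perron_characterization
    (n a : ℤ) (ha : 0 < a) (han : a < n) (hcop : IsCoprime n a) :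
    (∃ (s : ℕ) (q : ℤ → ℤ), 1 ≤ s ∧ (∀ k : ℤ, 1 ≤ k → k ≤ (s : ℤ) → 0 < q k) ∧
        symRem q s 1 = n ∧ symRem q s 2 = a) ↔
      a ^ 2 ≡ -1 [ZMOD n] := by
  have e1 : ∀ (q : ℤ → ℤ) (s : ℕ), symRem q s 1 = symAux q s (2 * s + 1) := by
    intro q s
    unfold symRem
    congr 1
    omega
  have e2 : ∀ (q : ℤ → ℤ) (s : ℕ), symRem q s 2 = symAux q s (2 * s) := by
    intro q s
    unfold symRem
    congr 1
    omega
  constructor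
  · rintro ⟨s, q, _, _, h1, h2⟩
    have h := (sym_forward s q).2
    rw [← e1, ← e2, h1, h2] at h
    apply Int.ModEq.symm
    rw [Int.modEq_iff_dvd]
    exact ⟨symCo q s (2 * s), by linarith⟩
  · intro h
    obtain ⟨m, hm⟩ := Int.modEq_iff_dvd.mp h.symm
    obtain ⟨s, q, hs, hq, h1, h2, _⟩ :=
      sym_backward n.toNat n a m le_rfl ha han (by linarith)
    exact ⟨s, q, hs, hq, by rw [e1, h1], by rw [e2, h2]⟩
end
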